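/- arXiv:1611.08037 — 2 statements merged into one kernel-verified Lean document; each statement's English description precedes it below -/
import Mathlib

section
/- Let n ≥ 1, let K ≥ 0, let Δt > 0 and T > 0, and for each i ∈ {1,…,n} let f_i : ℝ → ℝ satisfy |f_i(t) − f_i(s)| ≤ K·|t − s| for all t, s ∈ [0, T]. Let v_1, …, v_m (m ≤ n) be a sequence of pairwise distinct indices in {1,…,n}, and let τ_1, …, τ_m and τ'_1, …, τ'_m be nonnegative reals with |τ_k − τ'_k| ≤ Δt for every k. Define the visit times t_k = τ_1 + ⋯ + τ_k and s_k = τ'_1 + ⋯ + τ'_k, and assume t_k ∈ [0, T] and s_k ∈ [0, T] for all k ∈ {1,…,m}. Then |Σ_{k=1}^m f_{v_k}(t_k) − Σ_{k=1}^m f_{v_k}(s_k)| ≤ (n(n+1)/2)·K·Δt. -/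
/-!
The `k`-th visit times `t k` and `s k` are partial sums of `k + 1` travel times (with `k` counted
from `0`), so the triangle inequality gives `|t k - s k| ≤ (k + 1) Δt`. The Lipschitz condition
turns this into a change of at most `K (k + 1) Δt` in the `k`-th profit, and summing over the path
gives the triangular number `m (m + 1) / 2 ≤ n (n + 1) / 2` (`sum_fin_succ_eq`).
-/

theorem sum_fin_succ_eq (m : ℕ) : ∑ k : Fin m, ((k : ℝ) + 1) = (m : ℝ) * (m + 1) / 2 := by
  induction m with
  | zero => simp
  | succ m ih =>
    rw [Fin.sum_univ_castSucc]
    simp only [Fin.val_castSucc, Fin.val_last, ih]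
    push_cast
    ring

/-- Per-path bound at the core of Proposition 1: along a path visiting at most
`n` distinct depots, if each inter-depot travel time is perturbed by at most `Δt`,
then under a uniform Lipschitz constant `K` on `[0, T]` for all profit functions,
the total collected profit changes by at most `(n(n+1)/2)·K·Δt`. -/
theorem per_path_bound
    (n m : ℕ) (hn : 1 ≤ n) (hm : m ≤ n)
    (K Δt T : ℝ) (hK : 0 ≤ K) (hΔt : 0 < Δt) (hT : 0 < T)
    (f : Fin n → ℝ → ℝ)
    (hLip : ∀ i : Fin n, ∀ t ∈ Set.Icc (0:ℝ) T, ∀ s ∈ Set.Icc (0:ℝ) T,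
      |f i t - f i s| ≤ K * |t - s|)
    (v : Fin m → Fin n) (hv : Function.Injective v)
    (τ τ' : Fin m → ℝ)
    (hτ : ∀ k, 0 ≤ τ k) (hτ' : ∀ k, 0 ≤ τ' k)
    (hround : ∀ k, |τ k - τ' k| ≤ Δt)
    (t s : Fin m → ℝ)
    (ht : ∀ k : Fin m, t k = ∑ j ∈ Finset.univ.filter (fun j : Fin m => j ≤ k), τ j)
    (hs : ∀ k : Fin m, s k = ∑ j ∈ Finset.univ.filter (fun j : Fin m => j ≤ k), τ' j)
    (htT : ∀ k, t k ∈ Set.Icc (0:ℝ) T)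
    (hsT : ∀ k, s k ∈ Set.Icc (0:ℝ) T) :
    |(∑ k : Fin m, f (v k) (t k)) - ∑ k : Fin m, f (v k) (s k)|
      ≤ ((n : ℝ) * (n + 1) / 2) * K * Δt := by
  have htime : ∀ k : Fin m, |t k - s k| ≤ ((k : ℝ) + 1) * Δt := by
    intro k
    rw [ht, hs, ← Finset.sum_sub_distrib]
    refine (Finset.abs_sum_le_sum_abs _ _).trans
      ((Finset.sum_le_card_nsmul _ _ Δt fun j _ => hround j).trans_eq ?_)
    have hcard : (Finset.univ.filter (fun j : Fin m => j ≤ k)).card = (k : ℕ) + 1 := by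
      rw [Finset.filter_ge_eq_Iic, Fin.card_Iic]
    rw [hcard, nsmul_eq_mul]
    push_cast
    rfl
  have hmn : (m : ℝ) ≤ n := by exact_mod_cast hm
  rw [← Finset.sum_sub_distrib]
  calc |∑ k : Fin m, (f (v k) (t k) - f (v k) (s k))|
      ≤ ∑ k : Fin m, |f (v k) (t k) - f (v k) (s k)| := Finset.abs_sum_le_sum_abs _ _
    _ ≤ ∑ k : Fin m, ((k : ℝ) + 1) * (K * Δt) := by
        refine Finset.sum_le_sum fun k _ => ?_
        calc |f (v k) (t k) - f (v k) (s k)| ≤ K * |t k - s k| :=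
              hLip _ _ (htT k) _ (hsT k)
          _ ≤ K * (((k : ℝ) + 1) * Δt) := mul_le_mul_of_nonneg_left (htime k) hK
          _ = ((k : ℝ) + 1) * (K * Δt) := by ring
    _ = ((m : ℝ) * (m + 1) / 2) * (K * Δt) := by rw [← Finset.sum_mul, sum_fin_succ_eq]
    _ ≤ ((n : ℝ) * (n + 1) / 2) * (K * Δt) := by gcongr
    _ = ((n : ℝ) * (n + 1) / 2) * K * Δt := by ring
end

section
/- Let n ≥ 1, K ≥ 0, Δt > 0 and T > 0, and for each i ∈ {1,…,n} let f_i : ℝ → ℝ satisfy |f_i(t) − f_i(s)| ≤ K·|t − s| for all t, s ∈ [0, T]. Let τ and τ' be two families of nonnegative travel times indexed by pairs of vertices {0,1,…,n}, with |τ(i,j) − τ'(i,j)| ≤ Δt for all i, j. Call a list p = (v_1,…,v_m) of pairwise distinct vertices of {1,…,n} τ-feasible if all its cumulative visit times t_k(p) = τ(0,v_1) + τ(v_1,v_2) + ⋯ + τ(v_{k−1},v_k) lie in [0, T], and define its τ-profit as Σ_{k=1}^m f_{v_k}(t_k(p)); define τ'-feasibility and τ'-profit analogously. Assume that a list is τ-feasible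 if and only if it is τ'-feasible, and that the set of feasible lists is nonempty. Let z be the maximum τ-profit over all τ-feasible lists and z' the maximum τ'-profit over all τ'-feasible lists. Then |z − z'| ≤ (n(n+1)/2)·K·Δt. -/
/-!
Along a fixed route, each edge contributes at most `Δt` to the discrepancy between the two
cumulative times, so the `k`-th visit times differ by at most `k * Δt` and, by the Lipschitz
condition, the `k`-th profits by at most `K * (k * Δt)`. Summing over the `m` visits of the route
gives `m (m + 1) / 2 * K * Δt` (`abs_profit_sub_le`), and `m ≤ n` because the visited depots are
distinct (`abs_pathProfit_sub_le`). As both problems have the same feasible routes, an optimal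
route of either one is a competitor in the other with nearly the same profit, so the optimal
values satisfy the same bound.
-/

/-- The list of cumulative visit times of a route `p` through the depots
`{1,…,n}` (encoded as `Fin n`, with depot `i` appearing as the vertex
`i.succ : Fin (n+1)` and `0 : Fin (n+1)` being the dummy start depot):
starting from vertex `cur` at time `acc`, visiting `v` takes `τ cur v.succ`
additional time units. -/
def pathTimes {n : ℕ} (τ : Fin (n+1) → Fin (n+1) → ℝ) :
    Fin (n+1) → ℝ → List (Fin n) → List ℝ
  | _, _, [] => []
  | cur, acc, v :: rest =>
      (acc + τ cur v.succ) :: pathTimes τ v.succ (acc + τ cur v.succ) rest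

/-- A list of pairwise distinct depots is `τ`-feasible if all its cumulative
visit times (starting from the dummy depot `0` at time `0`) lie in `[0, T]`. -/
def Feasible {n : ℕ} (τ : Fin (n+1) → Fin (n+1) → ℝ) (T : ℝ)
    (p : List (Fin n)) : Prop :=
  p.Nodup ∧ ∀ x ∈ pathTimes τ 0 0 p, x ∈ Set.Icc (0:ℝ) T

/-- The `τ`-profit of a route `p`: the sum of the time-varying profits `f i`
evaluated at the corresponding cumulative visit times. -/
def pathProfit {n : ℕ} (f : Fin n → ℝ → ℝ) (τ : Fin (n+1) → Fin (n+1) → ℝ)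
    (p : List (Fin n)) : ℝ :=
  ((p.zip (pathTimes τ 0 0 p)).map fun q => f q.1 q.2).sum

/-- Profit discrepancy for the remainder of a route, started from times `a` and `b` that already
differ by at most `d * Δt`. The offset `d` is what makes the induction on the route go through:
it increases by one with each edge. -/
lemma abs_profit_sub_le {n : ℕ} {K Δt T : ℝ} (hK : 0 ≤ K)
    {f : Fin n → ℝ → ℝ}
    (hLip : ∀ i : Fin n, ∀ t ∈ Set.Icc (0:ℝ) T, ∀ s ∈ Set.Icc (0:ℝ) T,
      |f i t - f i s| ≤ K * |t - s|)
    {τ τ' : Fin (n+1) → Fin (n+1) → ℝ}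
    (hround : ∀ i j, |τ i j - τ' i j| ≤ Δt)
    (p : List (Fin n)) (cur : Fin (n+1)) (a b d : ℝ) (hab : |a - b| ≤ d * Δt)
    (ha : ∀ x ∈ pathTimes τ cur a p, x ∈ Set.Icc (0:ℝ) T)
    (hb : ∀ x ∈ pathTimes τ' cur b p, x ∈ Set.Icc (0:ℝ) T) :
    |((p.zip (pathTimes τ cur a p)).map fun q => f q.1 q.2).sum
      - ((p.zip (pathTimes τ' cur b p)).map fun q => f q.1 q.2).sum|
      ≤ (p.length * d + p.length * (p.length + 1) / 2) * K * Δt := by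
  induction p generalizing cur a b d with
  | nil => simp [pathTimes]
  | cons v rest ih =>
    simp only [pathTimes, List.forall_mem_cons] at ha hb
    have hstep : |(a + τ cur v.succ) - (b + τ' cur v.succ)| ≤ (d + 1) * Δt := by
      calc |(a + τ cur v.succ) - (b + τ' cur v.succ)|
          = |(a - b) + (τ cur v.succ - τ' cur v.succ)| := by ring_nf
        _ ≤ |a - b| + |τ cur v.succ - τ' cur v.succ| := abs_add_le _ _
        _ ≤ (d + 1) * Δt := by linarith [hround cur v.succ]
    have hrest := ih v.succ _ _ (d + 1) hstep ha.2 hb.2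
    have hhead := (hLip v _ ha.1 _ hb.1).trans (mul_le_mul_of_nonneg_left hstep hK)
    simp only [pathTimes, List.zip_cons_cons, List.map_cons, List.sum_cons, List.length_cons]
    rw [add_sub_add_comm]
    refine (abs_add_le _ _).trans ((add_le_add hhead hrest).trans_eq ?_)
    push_cast
    ring

lemma abs_pathProfit_sub_le {n : ℕ} {K Δt T : ℝ} (hK : 0 ≤ K) (hΔt : 0 < Δt)
    {f : Fin n → ℝ → ℝ}
    (hLip : ∀ i : Fin n, ∀ t ∈ Set.Icc (0:ℝ) T, ∀ s ∈ Set.Icc (0:ℝ) T,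
      |f i t - f i s| ≤ K * |t - s|)
    {τ τ' : Fin (n+1) → Fin (n+1) → ℝ}
    (hround : ∀ i j, |τ i j - τ' i j| ≤ Δt)
    {p : List (Fin n)} (hp : Feasible τ T p) (hp' : Feasible τ' T p) :
    |pathProfit f τ p - pathProfit f τ' p| ≤ ((n : ℝ) * (n + 1) / 2) * K * Δt := by
  have hlen : (p.length : ℝ) ≤ n := by
    exact_mod_cast hp.1.length_le_card.trans_eq (Fintype.card_fin n)
  have h := abs_profit_sub_le hK hLip hround p 0 0 0 0 (by simp) hp.2 hp'.2
  rw [mul_zero, zero_add] at h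
  refine h.trans ?_
  gcongr

/-- Proposition 1 of the paper: if the rounded travel times `τ'` differ from the
true travel times `τ` by at most `Δt` on every edge, feasibility is preserved,
and all profit functions are `K`-Lipschitz on `[0, T]`, then the optimal values
`z` (true) and `z'` (rounded) differ by at most `(n(n+1)/2)·K·Δt`. -/
theorem optimal_value_discretization_bound
    (n : ℕ) (hn : 1 ≤ n)
    (K Δt T : ℝ) (hK : 0 ≤ K) (hΔt : 0 < Δt) (hT : 0 < T)
    (f : Fin n → ℝ → ℝ)
    (hLip : ∀ i : Fin n, ∀ t ∈ Set.Icc (0:ℝ) T, ∀ s ∈ Set.Icc (0:ℝ) T,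
      |f i t - f i s| ≤ K * |t - s|)
    (τ τ' : Fin (n+1) → Fin (n+1) → ℝ)
    (hτ : ∀ i j, 0 ≤ τ i j) (hτ' : ∀ i j, 0 ≤ τ' i j)
    (hround : ∀ i j, |τ i j - τ' i j| ≤ Δt)
    (hfeas : ∀ p : List (Fin n), Feasible τ T p ↔ Feasible τ' T p)
    (hne : ∃ p : List (Fin n), Feasible τ T p)
    (z z' : ℝ)
    (hz : IsGreatest {x : ℝ | ∃ p : List (Fin n), Feasible τ T p ∧ x = pathProfit f τ p} z)
    (hz' : IsGreatest {x : ℝ | ∃ p : List (Fin n), Feasible τ' T p ∧ x = pathProfit f τ' p} z') :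
    |z - z'| ≤ ((n : ℝ) * (n + 1) / 2) * K * Δt := by
  obtain ⟨⟨p, hp, rfl⟩, hmax⟩ := hz
  obtain ⟨⟨p', hp', rfl⟩, hmax'⟩ := hz'
  have h' := abs_le.1 (abs_pathProfit_sub_le hK hΔt hLip hround ((hfeas p').2 hp') hp')
  have h := abs_le.1 (abs_pathProfit_sub_le hK hΔt hLip hround hp ((hfeas p).1 hp))
  -- Each optimal route is a competitor in the other problem.
  have hcomp : pathProfit f τ p' ≤ pathProfit f τ p := hmax ⟨p', (hfeas p').2 hp', rfl⟩
  have hcomp' : pathProfit f τ' p ≤ pathProfit f τ' p' := hmax' ⟨p, (hfeas p).1 hp, rfl⟩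
  rw [abs_le]
  constructor <;> linarith [h.1, h.2, h'.1, h'.2]
end
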